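/- arXiv:1905.12700 — 3 statements merged into one kernel-verified Lean document; each statement's English description precedes it below -/
import Mathlib

section
/- Let E ≥ 1 be an integer, let 0 ≤ k, l ≤ E, let η > 0 satisfy η·E ≤ 2, and let s be an integer with 1 ≤ s ≤ E − max(k,l). Then η^s · √(binom(s+k, k) · binom(s+l, l)) ≤ η · √((k+1)·(l+1)). -/
/-!
The ratio of `binom(n+2+k, k)` to `binom(n+1+k, k)` is `(n+2+k)/(n+2)`, which is largest at `n = 0`,
where it equals `(k+2)/2`. Starting from `binom(1+k, k) = k+1`, the binomial coefficients therefore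
grow at most geometrically with ratio `(k+2)/2`. As soon as `η(k+2) ≤ 2`, the powers of `η` absorb
this growth for every `s`; for `s = 1` the asserted inequality is an equality.
-/

theorem two_pow_mul_choose_le (n k : ℕ) :
    2 ^ n * (n + 1 + k).choose k ≤ (k + 1) * (k + 2) ^ n := by
  induction n with
  | zero => simp [Nat.add_comm 1 k]
  | succ n ih =>
    have choose_ratio :
        (n + 1 + 1 + k).choose k * (n + 2) = (n + 1 + k).choose k * (n + 2 + k) := by
      have := Nat.choose_mul_succ_eq (n + 1 + k) k
      grind
    have ratio_le : 2 * (n + 2 + k) ≤ (k + 2) * (n + 2) := by nlinarith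
    refine Nat.le_of_mul_le_mul_right ?_ (Nat.succ_pos (n + 1))
    calc 2 ^ (n + 1) * (n + 1 + 1 + k).choose k * (n + 2)
        = 2 ^ n * (n + 1 + k).choose k * (2 * (n + 2 + k)) := by
          rw [mul_assoc, choose_ratio]; ring
      _ ≤ (k + 1) * (k + 2) ^ n * ((k + 2) * (n + 2)) := Nat.mul_le_mul ih ratio_le
      _ = (k + 1) * (k + 2) ^ (n + 1) * (n + 2) := by ring

theorem pow_mul_choose_le {R : Type*} [CommSemiring R] [LinearOrder R] [IsStrictOrderedRing R]
    {η : R} {k : ℕ} (hη : 0 ≤ η) (hηk : η * (k + 2) ≤ 2) (n : ℕ) :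
    η ^ n * ((n + 1 + k).choose k : R) ≤ k + 1 := by
  have choose_le : (2 : R) ^ n * ((n + 1 + k).choose k : R) ≤ (k + 1) * (k + 2) ^ n :=
    mod_cast two_pow_mul_choose_le n k
  refine le_of_mul_le_mul_right ?_ (pow_pos (two_pos (α := R)) n)
  calc η ^ n * ((n + 1 + k).choose k : R) * 2 ^ n
      = η ^ n * (2 ^ n * ((n + 1 + k).choose k : R)) := by ring
    _ ≤ η ^ n * ((k + 1) * (k + 2) ^ n) := by gcongr
    _ = (k + 1) * (η * (k + 2)) ^ n := by rw [mul_pow]; ring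
    _ ≤ (k + 1) * 2 ^ n := by gcongr

theorem stmt5_general (k l s : ℕ) (η : ℝ) (hη : 0 ≤ η) (hs : 1 ≤ s)
    (hηkl : 2 ≤ s → η * ((max k l : ℕ) + 2) ≤ 2) :
    η ^ s * Real.sqrt (((s + k).choose k * (s + l).choose l : ℕ)) ≤
      η * Real.sqrt (((k : ℝ) + 1) * ((l : ℝ) + 1)) := by
  obtain rfl | hs2 := hs.eq_or_lt
  · simp [Nat.add_comm 1]
  obtain ⟨n, rfl⟩ := Nat.exists_eq_add_of_le' hs
  have choose_le (m : ℕ) (hm : m ≤ max k l) : η ^ n * ((n + 1 + m).choose m : ℝ) ≤ m + 1 :=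
    pow_mul_choose_le hη ((by gcongr : η * ((m : ℝ) + 2) ≤ _).trans (hηkl hs2)) n
  calc η ^ (n + 1) * √((n + 1 + k).choose k * (n + 1 + l).choose l : ℕ)
      = η * √((η ^ n * (n + 1 + k).choose k) * (η ^ n * (n + 1 + l).choose l)) := by
        rw [mul_mul_mul_comm, ← sq, Real.sqrt_mul (by positivity), Real.sqrt_sq (by positivity)]
        push_cast
        ring
    _ ≤ η * √((k + 1) * (l + 1)) := by
        gcongr
        exacts [choose_le k (le_max_left k l), choose_le l (le_max_right k l)]

/-- `η^s·√(binom(s+k,k)·binom(s+l,l)) ≤ η·√((k+1)(l+1))` for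
`1 ≤ s ≤ E − max(k,l)` and `η·E ≤ 2`. -/
theorem stmt5 (E k l s : ℕ) (hE : 1 ≤ E) (hk : k ≤ E) (hl : l ≤ E)
    (η : ℝ) (hη : 0 < η) (hηE : η * E ≤ 2)
    (hs1 : 1 ≤ s) (hs2 : s ≤ E - max k l) :
    η ^ s * Real.sqrt (((s + k).choose k * (s + l).choose l : ℕ)) ≤
      η * Real.sqrt (((k : ℝ) + 1) * ((l : ℝ) + 1)) :=
  stmt5_general k l s η hη.le hs1 fun hs ↦
    hηE.trans' (by gcongr; exact_mod_cast (by lia : max k l + 2 ≤ E))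
end

section
/- For all integers n ≥ 1 and 0 ≤ r ≤ n, and every real p with 0 ≤ p ≤ 1: 2·binom(n,r)·p^{r+1}·(1−p)^{n−r} ≤ (√(r+1)/n)·exp((r+1)²/(n+1)). -/
/-!
Multiplying by `(n + 1) / (r + 1)` turns `binom(n, r)` into `binom(n + 1, r + 1)`, so the quantity
to bound is, up to elementary factors, the probability `binom(N, k) p ^ k (1 - p) ^ (N - k)` with
`N = n + 1` and `k = r + 1`. This probability is largest at `p = k / N`; there
`binom(N, k) ≤ N ^ k / k!` and `1 - k / N ≤ exp (-k / N)` bound it by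
`(k / e) ^ k / k! * exp (k ^ 2 / N)`, and Stirling's lower bound for `k!` leaves
`exp (k ^ 2 / N) / (2 √k)`.
-/

open Real

lemma pow_le_natCast_pow_mul_exp_sub (k : ℕ) {x : ℝ} (hx : 0 ≤ x) :
    x ^ k ≤ (k : ℝ) ^ k * exp (x - k) := by
  rcases k.eq_zero_or_pos with rfl | hk
  · simpa using hx
  have hk' : (0 : ℝ) < k := by exact_mod_cast hk
  have tangent : x ≤ k * exp (x / k - 1) :=
    calc x = k * (x / k - 1 + 1) := by field_simp; ring
      _ ≤ k * exp (x / k - 1) := by gcongr; exact add_one_le_exp _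
  calc x ^ k ≤ (k * exp (x / k - 1)) ^ k := by gcongr
    _ = (k : ℝ) ^ k * exp (x - k) := by
      rw [mul_pow, ← exp_nat_mul, mul_sub, mul_div_cancel₀ x hk'.ne', mul_one]

lemma pow_mul_pow_le_of_add_eq {k m : ℕ} {a b : ℝ} (ha : 0 ≤ a) (hb : 0 ≤ b)
    (hab : a + b = k + m) : a ^ k * b ^ m ≤ (k : ℝ) ^ k * (m : ℝ) ^ m :=
  calc a ^ k * b ^ m ≤ ((k : ℝ) ^ k * exp (a - k)) * ((m : ℝ) ^ m * exp (b - m)) := by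
        gcongr
        · exact pow_le_natCast_pow_mul_exp_sub k ha
        · exact pow_le_natCast_pow_mul_exp_sub m hb
    _ = (k : ℝ) ^ k * (m : ℝ) ^ m * exp ((a - k) + (b - m)) := by rw [exp_add]; ring
    _ = (k : ℝ) ^ k * (m : ℝ) ^ m := by
        rw [show (a - k) + (b - m) = 0 by linarith, exp_zero, mul_one]

lemma two_mul_sqrt_mul_div_exp_pow_le_factorial (k : ℕ) :
    2 * √k * (k / exp 1) ^ k ≤ (k.factorial : ℝ) := by
  have two_le : (2 : ℝ) ≤ √(2 * π) := le_sqrt_of_sq_le (by linarith [pi_gt_three])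
  calc 2 * √k * (k / exp 1) ^ k ≤ √(2 * π) * √k * (k / exp 1) ^ k := by gcongr
    _ = √(2 * π * k) * (k / exp 1) ^ k := by rw [sqrt_mul (x := 2 * π) (by positivity)]
    _ ≤ k.factorial := Stirling.le_factorial_stirling k

section Binomial

variable {n k : ℕ}

lemma sub_pow_sub_le_pow_mul_exp (hk : k ≤ n) :
    ((n - k : ℕ) : ℝ) ^ (n - k) ≤ (n : ℝ) ^ (n - k) * exp ((k : ℝ) ^ 2 / n - k) := by
  rcases n.eq_zero_or_pos with rfl | hn
  · simp [Nat.le_zero.mp hk]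
  have : (0 : ℝ) < n := by exact_mod_cast hn
  have base : ((n - k : ℕ) : ℝ) ≤ n * exp (-(k / n)) :=
    calc ((n - k : ℕ) : ℝ) = n * (1 - k / n) := by rw [Nat.cast_sub hk]; field_simp
      _ ≤ n * exp (-(k / n)) := by gcongr; exact one_sub_le_exp_neg _
  calc ((n - k : ℕ) : ℝ) ^ (n - k) ≤ (n * exp (-(k / n))) ^ (n - k) := by gcongr
    _ = (n : ℝ) ^ (n - k) * exp ((k : ℝ) ^ 2 / n - k) := by
      rw [mul_pow, ← exp_nat_mul, Nat.cast_sub hk]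
      congr 2
      field_simp
      ring

variable {p : ℝ}

lemma mul_pow_mul_one_sub_pow_le (hk : k ≤ n) (hp0 : 0 ≤ p) (hp1 : p ≤ 1) :
    (n * p) ^ k * (1 - p) ^ (n - k) ≤ (k / exp 1) ^ k * exp ((k : ℝ) ^ 2 / n) := by
  rcases n.eq_zero_or_pos with rfl | hn
  · simp [Nat.le_zero.mp hk]
  have hn' : (0 : ℝ) < n := by exact_mod_cast hn
  have : 0 ≤ 1 - p := sub_nonneg.mpr hp1
  have at_mode : (n * p) ^ k * (n * (1 - p)) ^ (n - k) ≤
      (k : ℝ) ^ k * ((n - k : ℕ) : ℝ) ^ (n - k) :=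
    pow_mul_pow_le_of_add_eq (by positivity) (by positivity) (by rw [Nat.cast_sub hk]; ring)
  refine le_of_mul_le_mul_left ?_ (pow_pos hn' (n - k))
  calc (n : ℝ) ^ (n - k) * ((n * p) ^ k * (1 - p) ^ (n - k))
      = (n * p) ^ k * (n * (1 - p)) ^ (n - k) := by rw [mul_pow _ (1 - p)]; ring
    _ ≤ (k : ℝ) ^ k * ((n - k : ℕ) : ℝ) ^ (n - k) := at_mode
    _ ≤ (k : ℝ) ^ k * ((n : ℝ) ^ (n - k) * exp ((k : ℝ) ^ 2 / n - k)) := by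
        gcongr
        exact sub_pow_sub_le_pow_mul_exp hk
    _ = (n : ℝ) ^ (n - k) * ((k / exp 1) ^ k * exp ((k : ℝ) ^ 2 / n)) := by
        rw [div_pow, exp_one_pow, exp_sub]; ring

lemma two_mul_sqrt_mul_choose_mul_pow_le_exp (hk : k ≤ n) (hp0 : 0 ≤ p) (hp1 : p ≤ 1) :
    2 * √k * (n.choose k * p ^ k * (1 - p) ^ (n - k)) ≤ exp ((k : ℝ) ^ 2 / n) := by
  have : 0 ≤ 1 - p := sub_nonneg.mpr hp1
  calc 2 * √k * (n.choose k * p ^ k * (1 - p) ^ (n - k))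
      ≤ 2 * √k * ((n : ℝ) ^ k / k.factorial * p ^ k * (1 - p) ^ (n - k)) := by
        gcongr
        exact Nat.choose_le_pow_div k n
    _ = 2 * √k / k.factorial * ((n * p) ^ k * (1 - p) ^ (n - k)) := by rw [mul_pow]; ring
    _ ≤ 2 * √k / k.factorial * ((k / exp 1) ^ k * exp ((k : ℝ) ^ 2 / n)) := by
        gcongr 2 * √k / k.factorial * ?_
        exact mul_pow_mul_one_sub_pow_le hk hp0 hp1
    _ = 2 * √k * (k / exp 1) ^ k / k.factorial * exp ((k : ℝ) ^ 2 / n) := by ring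
    _ ≤ exp ((k : ℝ) ^ 2 / n) :=
        mul_le_of_le_one_left (exp_nonneg _) <|
          div_le_one_of_le₀ (two_mul_sqrt_mul_div_exp_pow_le_factorial k) (Nat.cast_nonneg _)

end Binomial

/-- `2·binom(n,r)·p^{r+1}·(1−p)^{n−r} ≤ (√(r+1)/n)·exp((r+1)²/(n+1))`. -/
theorem stmt15 (n r : ℕ) (hn : 1 ≤ n) (hr : r ≤ n) (p : ℝ) (hp0 : 0 ≤ p) (hp1 : p ≤ 1) :
    2 * (n.choose r : ℝ) * p ^ (r + 1) * (1 - p) ^ (n - r) ≤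
      Real.sqrt ((r : ℝ) + 1) / (n : ℝ) * Real.exp (((r : ℝ) + 1) ^ 2 / ((n : ℝ) + 1)) := by
  have : (0 : ℝ) < n := by exact_mod_cast hn
  have absorption : ((n : ℝ) + 1) * n.choose r = (n + 1).choose (r + 1) * (r + 1) := by
    exact_mod_cast Nat.add_one_mul_choose_eq n r
  have sqrt_sq : √((r : ℝ) + 1) ^ 2 = r + 1 := sq_sqrt (by positivity)
  have binomial_le := two_mul_sqrt_mul_choose_mul_pow_le_exp (Nat.succ_le_succ hr) hp0 hp1
  rw [Nat.succ_sub_succ] at binomial_le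
  push_cast at binomial_le
  calc 2 * (n.choose r : ℝ) * p ^ (r + 1) * (1 - p) ^ (n - r)
      = √((r : ℝ) + 1) / (n + 1) * (2 * √((r : ℝ) + 1) *
          ((n + 1).choose (r + 1) * p ^ (r + 1) * (1 - p) ^ (n - r))) := by
        field_simp
        rw [sqrt_sq]
        linear_combination p ^ (r + 1) * (1 - p) ^ (n - r) * absorption
    _ ≤ √((r : ℝ) + 1) / (n + 1) * exp (((r : ℝ) + 1) ^ 2 / (n + 1)) := by gcongr
    _ ≤ √((r : ℝ) + 1) / n * exp (((r : ℝ) + 1) ^ 2 / (n + 1)) := by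
        gcongr
        exact le_add_of_nonneg_right zero_le_one
end

section
/- For all integers m ≥ 1, q ≥ 0 and n ≥ 8q + m: 1 − binom(n−8q, m)/binom(n−4q, m) ≤ m·(4q + m − 1)/(n − 4q). -/
/-! Each of the `m` factors of the falling factorial `a (a - 1) ⋯ (a - m + 1)` is at least
`a + 1 - m`, and each factor of `b (b - 1) ⋯ (b - m + 1)` is at most `b`. Hence the ratio of the
binomial coefficients is at least the `m`-th power of `(a + 1 - m) / b`, to which Bernoulli's
inequality applies. The theorem is the case `a = n - 8q`, `b = n - 4q`. -/

section ChooseRatio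

variable {K : Type*} [Field K] [LinearOrder K] [IsStrictOrderedRing K] {m b : ℕ}

theorem div_pow_le_choose_div_choose (a : ℕ) (hmb : m ≤ b) :
    (((a + 1 - m : ℕ) : K) / b) ^ m ≤ (a.choose m : K) / b.choose m := by
  have hfact : (0 : K) < m.factorial := mod_cast m.factorial_pos
  have hchoose : (0 : K) < b.choose m := mod_cast Nat.choose_pos hmb
  have hlower : ((a + 1 - m : ℕ) : K) ^ m ≤ m.factorial * a.choose m :=
    (div_le_iff₀' hfact).mp (mod_cast Nat.pow_le_choose m a)
  have hupper : (m.factorial : K) * b.choose m ≤ (b : K) ^ m :=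
    (le_div_iff₀' hfact).mp (Nat.choose_le_pow_div m b)
  calc (((a + 1 - m : ℕ) : K) / b) ^ m
      = ((a + 1 - m : ℕ) : K) ^ m / (b : K) ^ m := div_pow _ _ _
    _ ≤ (m.factorial * a.choose m) / (m.factorial * b.choose m) := by gcongr
    _ = a.choose m / b.choose m := mul_div_mul_left _ _ hfact.ne'

theorem stmt18_general (a : ℕ) (hmb : m ≤ b) :
    1 - (a.choose m : K) / b.choose m ≤ m * ((b : K) - (a + 1 - m)) / b := by
  obtain rfl | hm := m.eq_zero_or_pos
  · simp
  have hb : (0 : K) < b := mod_cast hm.trans_le hmb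
  set x : K := ((a + 1 - m : ℕ) : K) / b with hx
  have hbernoulli : 1 + m * (x - 1) ≤ x ^ m :=
    one_add_mul_sub_le_pow (neg_one_lt_zero.le.trans (by positivity)) m
  -- The subtraction in `x` truncates when `a + 1 < m`, so this is only an inequality.
  have hsub : (a : K) + 1 - m ≤ (a + 1 - m : ℕ) :=
    sub_le_iff_le_add.mpr (mod_cast le_tsub_add)
  calc 1 - (a.choose m : K) / b.choose m
      ≤ 1 - x ^ m := sub_le_sub_left (div_pow_le_choose_div_choose a hmb) 1
    _ ≤ m * (1 - x) := by linarith
    _ = m * (b - (a + 1 - m : ℕ)) / b := by rw [hx, one_sub_div hb.ne', mul_div_assoc]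
    _ ≤ m * ((b : K) - (a + 1 - m)) / b := by gcongr

end ChooseRatio

/-- `1 − binom(n−8q,m)/binom(n−4q,m) ≤ m·(4q+m−1)/(n−4q)`. -/
theorem stmt18 (m q n : ℕ) (hm : 1 ≤ m) (hq : 0 ≤ q) (hn : 8 * q + m ≤ n) :
    1 - ((n - 8 * q).choose m : ℝ) / ((n - 4 * q).choose m : ℝ) ≤
      (m : ℝ) * ((4 * q + m - 1 : ℕ) : ℝ) / ((n : ℝ) - 4 * q) := by
  refine (stmt18_general (n - 8 * q) (show m ≤ n - 4 * q by omega)).trans_eq ?_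
  push_cast [show 8 * q ≤ n by omega, show 4 * q ≤ n by omega, show 1 ≤ 4 * q + m by omega]
  ring
end
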